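/- (Proposition 8, strong-interference achievability gap with a discrete input.) Let 1 ≤ snr ≤ snr0 and β ∈ (0,1]. Set c₂ := 3/( 2·log( 12·(1+β·snr0)/β ) ), N := ⌊ √(1 + c₂·snr) ⌋, and let X_D ~ PAM(N). Then X_D satisfies the MMSE constraint mmse(X_D, snr0) ≤ β/(1+β·snr0), and its mutual information obeys ½·log(1+snr) − I(X_D, snr) ≤ ½·log( 1 + (2/3)·log( 12·(1+β·snr0)/β ) ) + ½·log(4πe/6). -/

import Mathlib

open MeasureTheory ProbabilityTheory Real
open scoped ENNReal

noncomputable section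

/-- The scalar observation `Y_snr(V) = √snr · V + Z`. -/
def obsS {Ω : Type*} (V Z : Ω → ℝ) (snr : ℝ) : Ω → ℝ :=
  fun ω => Real.sqrt snr * V ω + Z ω

/-- The σ-algebra generated by the observation `Y_snr(V)`. -/
def obsSigmaS {Ω : Type*} [MeasurableSpace Ω] (V Z : Ω → ℝ) (snr : ℝ) : MeasurableSpace Ω :=
  MeasurableSpace.comap (obsS V Z snr) inferInstance

/-- `mmse(V, snr) = E[(V − E[V | Y_snr(V)])²]`. -/
def mmseS {Ω : Type*} [MeasurableSpace Ω] (μ : Measure Ω) (V Z : Ω → ℝ) (snr : ℝ) : ℝ :=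
  ∫ ω, (V ω - (μ[V | obsSigmaS V Z snr]) ω) ^ 2 ∂μ

/-- Kullback-Leibler divergence (in nats), as the integral of the log Radon-Nikodym
derivative. -/
def klDivR {α : Type*} [MeasurableSpace α] (μ ν : Measure α) : ℝ :=
  ∫ x, Real.log (μ.rnDeriv ν x).toReal ∂μ

/-- `I(V, snr)`: the mutual information (in nats) between `V` and `Y_snr(V)`, namely the KL
divergence between the joint law of `(V, Y_snr(V))` and the product of its marginals. -/
def miS {Ω : Type*} [MeasurableSpace Ω] (μ : Measure Ω) (V Z : Ω → ℝ) (snr : ℝ) : ℝ :=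
  klDivR (Measure.map (fun ω => (V ω, obsS V Z snr ω)) μ)
    ((Measure.map V μ).prod (Measure.map (obsS V Z snr) μ))

/-- The mixed input `X_mix = √(1−δ)·X_D + √δ·X_G`. -/
def mixedInput {Ω : Type*} (δ : ℝ) (XD XG : Ω → ℝ) : Ω → ℝ :=
  fun ω => Real.sqrt (1 - δ) * XD ω + Real.sqrt δ * XG ω

/-- The `k`-th point of the unit-power `PAM(N)` constellation: `N` equally spaced points,
symmetric about `0`, with `E[X²] = 1` (minimum distance `d` with `d² = 12/(N²−1)`;
for `N = 1` the single point is `0`). -/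
def pamPoint (N : ℕ) (k : Fin N) : ℝ :=
  Real.sqrt (12 / ((N : ℝ) ^ 2 - 1)) * ((k : ℝ) - ((N : ℝ) - 1) / 2)

/-- The law of a `PAM(N)` input: uniform over the `N` constellation points. -/
def pamLaw (N : ℕ) : Measure ℝ :=
  ((N : ℝ≥0∞))⁻¹ • ∑ k : Fin N, Measure.dirac (pamPoint N k)

/-- `C_∞(snr, snr0, β) = ½·log⁺((1+β·snr)/(1+β·snr0)) + ½·log(1+min(snr, snr0))`. -/
def Cinf (snr snr0 β : ℝ) : ℝ :=
  (1 / 2) * max (Real.log ((1 + β * snr) / (1 + β * snr0))) 0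
    + (1 / 2) * Real.log (1 + min snr snr0)

/-- If `P ≤ c • Q`, then the log-likelihood ratio of `P` with respect to `Q` is `P`-integrable. -/
lemma integrable_llr_of_le_smul {α : Type*} [MeasurableSpace α] {P Q : Measure α}
    [IsFiniteMeasure P] [IsFiniteMeasure Q] {c : ℝ≥0∞} (hc : c ≠ ∞) (hPQ : P ≤ c • Q) :
    Integrable (llr P Q) P := by
  have hac : P ≪ Q := (Measure.absolutelyContinuous_of_le hPQ).trans
    Measure.smul_absolutelyContinuous
  rw [← integrable_rnDeriv_mul_log_iff hac]
  have hle : ∀ᵐ x ∂Q, P.rnDeriv Q x ≤ c := by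
    refine ae_le_of_forall_setLIntegral_le_of_sigmaFinite (Measure.measurable_rnDeriv P Q) ?_
    intro s hs _
    calc ∫⁻ x in s, P.rnDeriv Q x ∂Q ≤ P s := Measure.setLIntegral_rnDeriv_le s
      _ ≤ (c • Q) s := hPQ s
      _ = ∫⁻ _ in s, c ∂Q := by simp
  obtain ⟨C, hC⟩ := (isCompact_Icc (a := (0 : ℝ)) (b := c.toReal)).exists_bound_of_continuousOn
    Real.continuous_mul_log.continuousOn
  refine Integrable.of_bound (C := C) ?_ ?_
  · exact (Real.continuous_mul_log.measurable.comp
      (Measure.measurable_rnDeriv P Q).ennreal_toReal).aestronglyMeasurable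
  · filter_upwards [hle] with x hx
    exact hC _ ⟨ENNReal.toReal_nonneg, ENNReal.toReal_mono hc hx⟩

/-- Donsker-Varadhan lower bound on the Kullback-Leibler divergence. -/
lemma integral_le_klDivR {α : Type*} [MeasurableSpace α] {P Q : Measure α}
    [IsProbabilityMeasure P] [IsProbabilityMeasure Q] {c : ℝ≥0∞} (hc : c ≠ ∞) (hPQ : P ≤ c • Q)
    {f : α → ℝ} (hf : Integrable f P) (hfQ : Integrable (fun x => Real.exp (f x)) Q)
    (hf1 : ∫ x, Real.exp (f x) ∂Q ≤ 1) :
    ∫ x, f x ∂P ≤ klDivR P Q := by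
  have hac : P ≪ Q := (Measure.absolutelyContinuous_of_le hPQ).trans
    Measure.smul_absolutelyContinuous
  have hint := integrable_llr_of_le_smul hc hPQ
  have htilt := integral_llr_tilted_right hac hf hfQ hint
  have : IsProbabilityMeasure (Q.tilted f) := isProbabilityMeasure_tilted hfQ
  have hnonneg := InformationTheory.integral_llr_add_sub_measure_univ_nonneg
    (hac.trans (absolutelyContinuous_tilted hfQ)) (integrable_llr_tilted_right hac hf hint hfQ)
  have hlog : Real.log (∫ x, Real.exp (f x) ∂Q) ≤ 0 :=
    Real.log_nonpos (integral_nonneg fun _ => (Real.exp_pos _).le) hf1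
  have hkl : klDivR P Q = ∫ x, llr P Q x ∂P := rfl
  simp only [probReal_univ] at hnonneg
  linarith

/-- The conditional expectation is the best estimator in mean square. -/
lemma integral_sq_sub_condExp_le {Ω : Type*} {m m0 : MeasurableSpace Ω} (hm : m ≤ m0)
    {μ : Measure Ω} [IsFiniteMeasure μ] {X g : Ω → ℝ} (hX : MemLp X 2 μ) (hg : MemLp g 2 μ)
    (hgm : StronglyMeasurable[m] g) :
    ∫ ω, (X ω - (μ[X | m]) ω) ^ 2 ∂μ ≤ ∫ ω, (X ω - g ω) ^ 2 ∂μ := by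
  have hW : MemLp (X - g) 2 μ := hX.sub hg
  have hce : μ[X - g | m] =ᵐ[μ] μ[X | m] - g := by
    have h := condExp_sub (hX.integrable one_le_two) (hg.integrable one_le_two) m
    rwa [condExp_of_stronglyMeasurable hm hgm (hg.integrable one_le_two)] at h
  have hWint : Integrable (fun ω => ((X - g) ω - (μ[X - g | m]) ω) ^ 2) μ :=
    (hW.sub (hW.condExp one_le_two)).integrable_sq
  calc ∫ ω, (X ω - (μ[X | m]) ω) ^ 2 ∂μ
      = ∫ ω, ((X - g) ω - (μ[X - g | m]) ω) ^ 2 ∂μ := by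
        refine integral_congr_ae ?_
        filter_upwards [hce] with ω hω
        simp [hω]
    _ = ∫ ω, (Var[X - g; μ | m]) ω ∂μ := (integral_condExp hm).symm
    _ ≤ ∫ ω, (μ[(X - g) ^ 2 | m]) ω ∂μ :=
        integral_mono_ae integrable_condVar integrable_condExp (condVar_ae_le_condExp_sq hm hW)
    _ = ∫ ω, (X ω - g ω) ^ 2 ∂μ := by
        rw [integral_condExp hm]
        rfl

lemma lintegral_pamLaw (N : ℕ) (f : ℝ → ℝ≥0∞) :
    ∫⁻ x, f x ∂pamLaw N = (N : ℝ≥0∞)⁻¹ * ∑ k : Fin N, f (pamPoint N k) := by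
  simp [pamLaw, lintegral_smul_measure]

lemma integrable_pamLaw {N : ℕ} (hN : N ≠ 0) (f : ℝ → ℝ) : Integrable f (pamLaw N) := by
  refine Integrable.smul_measure ?_ (by simpa using hN)
  refine integrable_finsetSum_measure.2 fun k _ => ?_
  exact integrable_dirac (by simp)

lemma integral_pamLaw (N : ℕ) (f : ℝ → ℝ) :
    ∫ x, f x ∂pamLaw N = (N : ℝ)⁻¹ * ∑ k : Fin N, f (pamPoint N k) := by
  rw [pamLaw, integral_smul_measure, integral_finsetSum_measure]
  · simp
  · exact fun k _ => integrable_dirac (by simp)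

lemma isProbabilityMeasure_pamLaw {N : ℕ} (hN : N ≠ 0) : IsProbabilityMeasure (pamLaw N) := by
  constructor
  simp [pamLaw, ENNReal.inv_mul_cancel, hN]

lemma ae_pamLaw (N : ℕ) : ∀ᵐ x ∂pamLaw N, ∃ k, x = pamPoint N k := by
  have hms : MeasurableSet {x : ℝ | ∃ k, x = pamPoint N k} := by
    have : {x : ℝ | ∃ k, x = pamPoint N k} = Set.range (pamPoint N) := by
      ext x; simp [eq_comm]
    rw [this]
    exact (Set.finite_range _).measurableSet
  refine (Measure.ae_smul_measure ?_ _)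
  rw [ae_iff, Measure.finsetSum_apply]
  refine Finset.sum_eq_zero fun k _ => ?_
  refine (Measure.dirac_apply' _ hms.compl).trans ?_
  simp

/-- A joint law whose first marginal is `PAM(N)` is dominated by `N` times the product of its
marginals. -/
lemma map_prodMk_le_smul_prod {Ω : Type*} [MeasurableSpace Ω] {μ : Measure Ω}
    [IsProbabilityMeasure μ] {X Y : Ω → ℝ} (hX : Measurable X) (hY : Measurable Y) {N : ℕ}
    (hN : N ≠ 0) (hXlaw : Measure.map X μ = pamLaw N) :
    Measure.map (fun ω => (X ω, Y ω)) μ ≤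
      (N : ℝ≥0∞) • (Measure.map X μ).prod (Measure.map Y μ) := by
  have : IsProbabilityMeasure (Measure.map Y μ) := Measure.isProbabilityMeasure_map hY.aemeasurable
  refine Measure.le_iff.2 fun S hS => ?_
  have hXae : ∀ᵐ ω ∂μ, ∃ k, X ω = pamPoint N k := by
    have h := ae_pamLaw N
    rw [← hXlaw] at h
    exact ae_of_ae_map hX.aemeasurable h
  rw [Measure.smul_apply, Measure.prod_apply hS, hXlaw, lintegral_pamLaw, smul_eq_mul,
    ← mul_assoc, ENNReal.mul_inv_cancel (by simpa using hN) (by simp), one_mul,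
    Measure.map_apply (hX.prodMk hY) hS]
  calc μ ((fun ω => (X ω, Y ω)) ⁻¹' S)
      ≤ μ (⋃ k : Fin N, Y ⁻¹' (Prod.mk (pamPoint N k) ⁻¹' S)) := by
        refine measure_mono_ae ?_
        filter_upwards [hXae] with ω ⟨k, hk⟩ hω
        refine Set.mem_iUnion.2 ⟨k, ?_⟩
        change (pamPoint N k, Y ω) ∈ S
        rw [← hk]
        exact hω
    _ ≤ ∑ k : Fin N, μ (Y ⁻¹' (Prod.mk (pamPoint N k) ⁻¹' S)) := measure_iUnion_fintype_le _ _
    _ = _ := by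
        refine Finset.sum_congr rfl fun k _ => ?_
        rw [Measure.map_apply hY (measurable_prodMk_left hS)]

lemma sum_range_sub_sq (N : ℕ) (a : ℝ) :
    ∑ k ∈ Finset.range N, ((k : ℝ) - a) ^ 2 =
      ((N : ℝ) - 1) * N * (2 * N - 1) / 6 - a * N * (N - 1) + N * a ^ 2 := by
  induction N with
  | zero => simp
  | succ n ih =>
    rw [Finset.sum_range_succ, ih]
    push_cast
    ring

lemma three_le_sq_sub_one {N : ℕ} (hN : 2 ≤ N) : (3 : ℝ) ≤ (N : ℝ) ^ 2 - 1 := by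
  have : (2 : ℝ) ≤ N := by exact_mod_cast hN
  nlinarith

lemma integral_sq_pamLaw {N : ℕ} (hN : 2 ≤ N) : ∫ x, x ^ 2 ∂pamLaw N = 1 := by
  have h3 := three_le_sq_sub_one hN
  have h2 : (2 : ℝ) ≤ N := by exact_mod_cast hN
  rw [integral_pamLaw]
  simp only [pamPoint, mul_pow]
  rw [Fin.sum_univ_eq_sum_range
    (fun k : ℕ => Real.sqrt (12 / ((N : ℝ) ^ 2 - 1)) ^ 2 * ((k : ℝ) - ((N : ℝ) - 1) / 2) ^ 2) N,
    ← Finset.mul_sum, sum_range_sub_sq, Real.sq_sqrt (by positivity)]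
  field_simp
  ring

/-- Jensen's inequality for a Gaussian kernel over an interval centred at `x`. -/
lemma mul_exp_le_integral_gaussian (x c : ℝ) {d v : ℝ} (hd : 0 ≤ d) (hv : 0 < v) :
    d * Real.exp (-((x - c) ^ 2 + d ^ 2 / 12) / (2 * v)) ≤
      ∫ u in (x - d / 2)..(x + d / 2), Real.exp (-(u - c) ^ 2 / (2 * v)) := by
  set w : ℝ := -((x - c) ^ 2 + d ^ 2 / 12) / (2 * v) with hw
  have hpoly : ∫ u in (x - d / 2)..(x + d / 2), (1 + -(u - c) ^ 2 / (2 * v) - w) = d := by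
    have hderiv : ∀ u ∈ Set.uIcc (x - d / 2) (x + d / 2),
        HasDerivAt (fun u : ℝ => u - (u - c) ^ 3 / (6 * v) - w * u)
          (1 + -(u - c) ^ 2 / (2 * v) - w) u := by
      intro u _
      have h := ((hasDerivAt_id u).sub
        ((((hasDerivAt_id u).sub_const c).pow 3).div_const (6 * v))).sub
          ((hasDerivAt_id u).const_mul w)
      refine h.congr_deriv ?_
      simp
      field_simp
      ring
    rw [intervalIntegral.integral_eq_sub_of_hasDerivAt hderiv
      (Continuous.intervalIntegrable (by fun_prop) _ _), hw]
    field_simp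
    ring
  calc d * Real.exp w
      = ∫ u in (x - d / 2)..(x + d / 2), Real.exp w * (1 + -(u - c) ^ 2 / (2 * v) - w) := by
        rw [intervalIntegral.integral_const_mul, hpoly, mul_comm]
    _ ≤ _ := by
        refine intervalIntegral.integral_mono_on (by linarith)
          (Continuous.intervalIntegrable (by fun_prop) _ _)
          (Continuous.intervalIntegrable (by fun_prop) _ _) fun u _ => ?_
        have h := Real.add_one_le_exp (-(u - c) ^ 2 / (2 * v) - w)
        calc Real.exp w * (1 + -(u - c) ^ 2 / (2 * v) - w)
            ≤ Real.exp w * Real.exp (-(u - c) ^ 2 / (2 * v) - w) := by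
              gcongr
              linarith
          _ = _ := by rw [← Real.exp_add]; ring_nf

lemma sum_mul_exp_pamPoint_le {N : ℕ} (c : ℝ) {v : ℝ} (hv : 0 < v) :
    ∑ k : Fin N, Real.sqrt (12 / ((N : ℝ) ^ 2 - 1)) *
      Real.exp (-((pamPoint N k - c) ^ 2 + Real.sqrt (12 / ((N : ℝ) ^ 2 - 1)) ^ 2 / 12) / (2 * v))
      ≤ Real.sqrt (2 * Real.pi * v) := by
  set d : ℝ := Real.sqrt (12 / ((N : ℝ) ^ 2 - 1)) with hd
  have hd0 : 0 ≤ d := Real.sqrt_nonneg _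
  set a : ℕ → ℝ := fun k => d * (k - (N : ℝ) / 2) with ha
  have hcont : Continuous fun u : ℝ => Real.exp (-(u - c) ^ 2 / (2 * v)) := by fun_prop
  have hint : Integrable fun u : ℝ => Real.exp (-(u - c) ^ 2 / (2 * v)) := by
    have h := (integrable_exp_neg_mul_sq (b := 1 / (2 * v)) (by positivity)).comp_sub_right c
    refine h.congr (ae_of_all _ fun u => ?_)
    simp only
    congr 1
    ring
  calc _ ≤ ∑ k : Fin N, ∫ u in (a k)..(a ((k : ℕ) + 1)), Real.exp (-(u - c) ^ 2 / (2 * v)) := by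
        refine Finset.sum_le_sum fun k _ => ?_
        have h := mul_exp_le_integral_gaussian (pamPoint N k) c hd0 hv
        have h1 : pamPoint N k - d / 2 = a k := by simp only [pamPoint, ← hd, ha]; ring
        have h2 : pamPoint N k + d / 2 = a ((k : ℕ) + 1) := by
          simp only [pamPoint, ← hd, ha]; push_cast; ring
        rwa [h1, h2] at h
    _ = ∫ u in (a 0)..(a N), Real.exp (-(u - c) ^ 2 / (2 * v)) := by
        rw [Fin.sum_univ_eq_sum_range
          (fun k : ℕ => ∫ u in (a k)..(a (k + 1)), Real.exp (-(u - c) ^ 2 / (2 * v))) N]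
        exact intervalIntegral.sum_integral_adjacent_intervals
          fun k _ => hcont.intervalIntegrable _ _
    _ ≤ ∫ u, Real.exp (-(u - c) ^ 2 / (2 * v)) := by
        rw [intervalIntegral.integral_of_le]
        · exact setIntegral_le_integral hint (ae_of_all _ fun _ => (Real.exp_pos _).le)
        · simp only [ha]
          gcongr
          simp
    _ = Real.sqrt (2 * Real.pi * v) := by
        have h := integral_gaussian (1 / (2 * v))
        rw [← integral_sub_right_eq_self _ c] at h
        rw [show 2 * Real.pi * v = Real.pi / (1 / (2 * v)) by field_simp, ← h]
        congr 1
        ext u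
        congr 1
        ring

lemma measurable_obsS {Ω : Type*} [MeasurableSpace Ω] {V Z : Ω → ℝ} (hV : Measurable V)
    (hZ : Measurable Z) (snr : ℝ) : Measurable (obsS V Z snr) :=
  (hV.const_mul _).add hZ

lemma memLp_two_of_map_eq_pamLaw {Ω : Type*} [MeasurableSpace Ω] {μ : Measure Ω} {X : Ω → ℝ}
    (hX : Measurable X) {N : ℕ} (hN : N ≠ 0) (hXlaw : Measure.map X μ = pamLaw N) :
    MemLp X 2 μ := by
  rw [memLp_two_iff_integrable_sq hX.aestronglyMeasurable]
  have h := integrable_pamLaw hN (fun x => x ^ 2)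
  rw [← hXlaw] at h
  exact h.comp_measurable hX

lemma memLp_two_of_map_eq_gaussianReal {Ω : Type*} [MeasurableSpace Ω] {μ : Measure Ω}
    {Z : Ω → ℝ} (hZ : Measurable Z) (hZlaw : Measure.map Z μ = gaussianReal 0 1) :
    MemLp Z 2 μ := by
  have h : MemLp id 2 (gaussianReal 0 1) := memLp_id_gaussianReal 2
  rw [← hZlaw] at h
  exact (memLp_map_measure_iff aestronglyMeasurable_id hZ.aemeasurable).1 h

/-- The mean square error of the linear estimator with coefficient `√snr / (1 + snr)`. -/
lemma integral_sq_sub_linear_estimate {Ω : Type*} [MeasurableSpace Ω] {μ : Measure Ω}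
    [IsProbabilityMeasure μ] {X Z : Ω → ℝ} (hX : Measurable X) (hZ : Measurable Z)
    (hZlaw : Measure.map Z μ = gaussianReal 0 1) (hindep : IndepFun X Z μ) {N : ℕ} (hN : 2 ≤ N)
    (hXlaw : Measure.map X μ = pamLaw N) {s : ℝ} (hs : 0 ≤ s) :
    ∫ ω, (X ω - Real.sqrt s / (1 + s) * obsS X Z s ω) ^ 2 ∂μ = 1 / (1 + s) := by
  have hX2 := memLp_two_of_map_eq_pamLaw hX (by omega) hXlaw
  have hZ2 := memLp_two_of_map_eq_gaussianReal hZ hZlaw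
  have hEX : ∫ ω, X ω ^ 2 ∂μ = 1 := by
    rw [← integral_sq_pamLaw hN, ← hXlaw, integral_map hX.aemeasurable (by fun_prop)]
  have hEZ : ∫ ω, Z ω ∂μ = 0 := by
    have h : ∫ x, x ∂gaussianReal 0 1 = 0 := integral_id_gaussianReal
    rwa [← hZlaw, integral_map hZ.aemeasurable (by fun_prop)] at h
  have hEZ2 : ∫ ω, Z ω ^ 2 ∂μ = 1 := by
    have h : Var[id; gaussianReal 0 1] = ((1 : NNReal) : ℝ) := variance_id_gaussianReal
    rw [variance_of_integral_eq_zero aemeasurable_id integral_id_gaussianReal, ← hZlaw,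
      integral_map hZ.aemeasurable (by fun_prop)] at h
    simpa using h
  have hXZ : ∫ ω, X ω * Z ω ∂μ = 0 := by
    rw [hindep.integral_fun_mul_eq_mul_integral hX.aestronglyMeasurable hZ.aestronglyMeasurable,
      hEZ, mul_zero]
  have h1 := (hX2.integrable_sq).const_mul ((1 / (1 + s)) ^ 2)
  have h2 := (hZ2.integrable_sq).const_mul (s / (1 + s) ^ 2)
  have h12 : Integrable (fun ω => (1 / (1 + s)) ^ 2 * X ω ^ 2 + s / (1 + s) ^ 2 * Z ω ^ 2) μ :=
    h1.add h2
  have h3 : Integrable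
      (fun ω => 2 * (1 / (1 + s)) * (Real.sqrt s / (1 + s)) * (X ω * Z ω)) μ :=
    (hX2.integrable_mul hZ2).const_mul _
  have hexp : ∀ ω, (X ω - Real.sqrt s / (1 + s) * obsS X Z s ω) ^ 2 =
      (1 / (1 + s)) ^ 2 * X ω ^ 2 + s / (1 + s) ^ 2 * Z ω ^ 2 -
        2 * (1 / (1 + s)) * (Real.sqrt s / (1 + s)) * (X ω * Z ω) := by
    intro ω
    have hsq := Real.mul_self_sqrt hs
    have hlin : X ω - Real.sqrt s / (1 + s) * obsS X Z s ω =
        1 / (1 + s) * X ω - Real.sqrt s / (1 + s) * Z ω := by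
      simp only [obsS]
      field_simp
      linear_combination (-X ω) * hsq
    rw [hlin]
    have hsq' : s / (1 + s) ^ 2 = (Real.sqrt s / (1 + s)) ^ 2 := by
      rw [div_pow, Real.sq_sqrt hs]
    rw [hsq']
    ring
  simp_rw [hexp]
  rw [integral_sub h12 h3, integral_add h1 h2, integral_const_mul, integral_const_mul,
    integral_const_mul, hEX, hEZ2, hXZ]
  field_simp
  ring

lemma miS_nonneg {Ω : Type*} [MeasurableSpace Ω] {μ : Measure Ω}
    [IsProbabilityMeasure μ] {X Z : Ω → ℝ} (hX : Measurable X) (hZ : Measurable Z) {N : ℕ}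
    (hN : N ≠ 0) (hXlaw : Measure.map X μ = pamLaw N) (s : ℝ) : 0 ≤ miS μ X Z s := by
  have hY := measurable_obsS hX hZ s
  have := Measure.isProbabilityMeasure_map (μ := μ) hX.aemeasurable
  have := Measure.isProbabilityMeasure_map (μ := μ) hY.aemeasurable
  have := Measure.isProbabilityMeasure_map (μ := μ) (hX.prodMk hY).aemeasurable
  have h := integral_le_klDivR (f := fun _ => 0) (ENNReal.natCast_ne_top N)
    (map_prodMk_le_smul_prod hX hY hN hXlaw) (integrable_const _) (by simp) (by simp)
  simpa [miS] using h

/-- The Ozarow-Wyner lower bound on the mutual information of a `PAM(N)` input. -/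
lemma ozarow_wyner_le_miS {Ω : Type*} [MeasurableSpace Ω] {μ : Measure Ω}
    [IsProbabilityMeasure μ] {X Z : Ω → ℝ} (hX : Measurable X) (hZ : Measurable Z)
    (hZlaw : Measure.map Z μ = gaussianReal 0 1) (hindep : IndepFun X Z μ) {N : ℕ} (hN : 2 ≤ N)
    (hXlaw : Measure.map X μ = pamLaw N) {s : ℝ} (hs : 0 ≤ s) :
    Real.log N - 1 / 2 * Real.log (1 + ((N : ℝ) ^ 2 - 1) / (1 + s)) -
      1 / 2 * Real.log (Real.pi * Real.exp 1 / 6) ≤ miS μ X Z s := by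
  have hN0 : N ≠ 0 := by omega
  have hNpos : (0 : ℝ) < N := by exact_mod_cast Nat.pos_of_ne_zero hN0
  have h3 := three_le_sq_sub_one hN
  have hY := measurable_obsS hX hZ s
  have := Measure.isProbabilityMeasure_map (μ := μ) hX.aemeasurable
  have := Measure.isProbabilityMeasure_map (μ := μ) hY.aemeasurable
  have := Measure.isProbabilityMeasure_map (μ := μ) (hX.prodMk hY).aemeasurable
  set d : ℝ := Real.sqrt (12 / ((N : ℝ) ^ 2 - 1)) with hd
  have hd2 : d ^ 2 = 12 / ((N : ℝ) ^ 2 - 1) := Real.sq_sqrt (by positivity)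
  have hdpos : 0 < d := Real.sqrt_pos.2 (by positivity)
  set v : ℝ := 1 / (1 + s) + d ^ 2 / 12 with hv
  have hvpos : 0 < v := by positivity
  set a : ℝ := Real.sqrt s / (1 + s)
  set K : ℝ := N * d / Real.sqrt (2 * Real.pi * v) with hK
  have hKpos : 0 < K := by positivity
  set f : ℝ × ℝ → ℝ :=
    fun p => Real.log K - ((p.1 - a * p.2) ^ 2 + d ^ 2 / 12) / (2 * v) with hf
  have hexpf : ∀ p, Real.exp (f p) =
      K * Real.exp (-((p.1 - a * p.2) ^ 2 + d ^ 2 / 12) / (2 * v)) := by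
    intro p
    simp only [hf]
    rw [sub_eq_add_neg (Real.log K), Real.exp_add, Real.exp_log hKpos, neg_div]
  have hsqint : Integrable (fun ω => (X ω - a * obsS X Z s ω) ^ 2) μ := by
    refine MemLp.integrable_sq ?_
    have hX2 := memLp_two_of_map_eq_pamLaw hX hN0 hXlaw
    have hZ2 := memLp_two_of_map_eq_gaussianReal hZ hZlaw
    exact hX2.sub (((hX2.const_mul (Real.sqrt s)).add hZ2).const_mul a)
  have hquad : Integrable
      (fun ω => ((X ω - a * obsS X Z s ω) ^ 2 + d ^ 2 / 12) / (2 * v)) μ :=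
    (hsqint.add (integrable_const _)).div_const _
  have hfμ : Integrable (fun ω => f (X ω, obsS X Z s ω)) μ := (integrable_const _).sub hquad
  have hfcont : Continuous f := by fun_prop
  have hfP : Integrable f (Measure.map (fun ω => (X ω, obsS X Z s ω)) μ) :=
    (integrable_map_measure hfcont.aestronglyMeasurable (hX.prodMk hY).aemeasurable).2 hfμ
  have hfQ : Integrable (fun p => Real.exp (f p))
      ((Measure.map X μ).prod (Measure.map (obsS X Z s) μ)) := by
    refine Integrable.of_bound (C := K) (by fun_prop) (ae_of_all _ fun p => ?_)
    rw [hexpf, Real.norm_of_nonneg (by positivity)]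
    refine mul_le_of_le_one_right hKpos.le (Real.exp_le_one_iff.2 ?_)
    rw [neg_div]
    exact neg_nonpos.2 (by positivity)
  have hle1 : ∫ p, Real.exp (f p) ∂((Measure.map X μ).prod (Measure.map (obsS X Z s) μ)) ≤ 1 := by
    rw [integral_prod_symm _ hfQ]
    have hpt : ∀ y, ∫ x, Real.exp (f (x, y)) ∂(Measure.map X μ) ≤ 1 := by
      intro y
      have hsum := sum_mul_exp_pamPoint_le (N := N) (a * y) hvpos
      rw [← hd, ← Finset.mul_sum] at hsum
      rw [hXlaw, integral_pamLaw]
      simp_rw [hexpf]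
      rw [← Finset.mul_sum, hK]
      rw [show ∀ S : ℝ, (N : ℝ)⁻¹ * (N * d / Real.sqrt (2 * Real.pi * v) * S) =
        d * S / Real.sqrt (2 * Real.pi * v) by intro S; field_simp]
      exact (div_le_one (by positivity)).2 hsum
    calc _ ≤ ∫ _, (1 : ℝ) ∂(Measure.map (obsS X Z s) μ) :=
          integral_mono hfQ.integral_prod_right (integrable_const _) hpt
      _ = 1 := by simp
  have hmain := integral_le_klDivR (ENNReal.natCast_ne_top N)
    (map_prodMk_le_smul_prod hX hY hN0 hXlaw) hfP hfQ hle1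
  rw [integral_map (hX.prodMk hY).aemeasurable hfcont.aestronglyMeasurable] at hmain
  have hEf : ∫ ω, f (X ω, obsS X Z s ω) ∂μ = Real.log K - 1 / 2 := by
    simp only [hf]
    rw [integral_sub (integrable_const _) hquad, integral_div, integral_add hsqint (integrable_const _),
      integral_sq_sub_linear_estimate hX hZ hZlaw hindep hN hXlaw hs]
    simp only [integral_const, probReal_univ, one_smul, ← hv]
    field_simp
  rw [hEf] at hmain
  refine le_trans (le_of_eq ?_) hmain
  have hvd : 2 * Real.pi * v =
      d ^ 2 * ((1 + ((N : ℝ) ^ 2 - 1) / (1 + s)) * (Real.pi / 6)) := by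
    rw [hv, hd2]
    field_simp
    ring
  have hlogK : Real.log K = Real.log N + Real.log d - (2 * Real.log d +
      (Real.log (1 + ((N : ℝ) ^ 2 - 1) / (1 + s)) + Real.log (Real.pi / 6))) / 2 := by
    rw [hK, Real.log_div (by positivity) (by positivity),
      Real.log_mul (by positivity) (by positivity), Real.log_sqrt (x := 2 * Real.pi * v) (by positivity), hvd,
      Real.log_mul (by positivity) (by positivity), Real.log_mul (by positivity) (by positivity),
      Real.log_pow]
    push_cast
    ring
  rw [hlogK, mul_div_right_comm Real.pi, Real.log_mul (by positivity) (by positivity),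
    Real.log_exp]
  ring

/-- The geometric mean of two unit-variance Gaussian densities is a multiple of the Gaussian density
centred at their midpoint. -/
lemma gaussianPDFReal_mul_gaussianPDFReal (a b y : ℝ) :
    gaussianPDFReal a 1 y * gaussianPDFReal b 1 y =
      (Real.exp (-(a - b) ^ 2 / 8) * gaussianPDFReal ((a + b) / 2) 1 y) ^ 2 := by
  simp only [gaussianPDFReal, NNReal.coe_one]
  rw [mul_mul_mul_comm, ← Real.exp_add, mul_left_comm, mul_pow, ← Real.exp_add, ← Real.exp_nat_mul,
    ← pow_two]
  congr 2
  push_cast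
  ring

/-- The posterior mean of a uniform input on the points `x` given a Gaussian observation. -/
def posteriorMean {ι : Type*} [Fintype ι] (x m : ι → ℝ) (y : ℝ) : ℝ :=
  ∑ j, gaussianPDFReal (m j) 1 y / (∑ i, gaussianPDFReal (m i) 1 y) * x j

section PosteriorMean

variable {ι : Type*} [Fintype ι] (x m : ι → ℝ) (y : ℝ)

lemma measurable_posteriorMean : Measurable (posteriorMean x m) := by
  have h : ∀ i, Measurable (gaussianPDFReal (m i) 1) := fun i => measurable_gaussianPDFReal _ _
  unfold posteriorMean
  fun_prop

variable [Nonempty ι]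

lemma sum_gaussianPDFReal_pos : 0 < ∑ i, gaussianPDFReal (m i) 1 y :=
  Finset.sum_pos (fun _ _ => gaussianPDFReal_pos _ _ _ one_ne_zero) Finset.univ_nonempty

lemma abs_posteriorMean_le : |posteriorMean x m y| ≤ ∑ j, |x j| := by
  refine (Finset.abs_sum_le_sum_abs _ _).trans (Finset.sum_le_sum fun j _ => ?_)
  rw [abs_mul]
  refine mul_le_of_le_one_left (abs_nonneg _) ?_
  rw [abs_of_nonneg (div_nonneg (gaussianPDFReal_nonneg _ _ _)
    (sum_gaussianPDFReal_pos m y).le)]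
  exact (div_le_one (sum_gaussianPDFReal_pos m y)).2 (Finset.single_le_sum
    (f := fun i => gaussianPDFReal (m i) 1 y) (fun i _ => gaussianPDFReal_nonneg _ _ _)
    (Finset.mem_univ j))

lemma mul_sq_sub_posteriorMean_le (k : ι) :
    gaussianPDFReal (m k) 1 y * (x k - posteriorMean x m y) ^ 2 ≤
      ∑ j, (x k - x j) ^ 2 / 2 *
        (Real.exp (-(m k - m j) ^ 2 / 8) * gaussianPDFReal ((m k + m j) / 2) 1 y) := by
  set S := ∑ i, gaussianPDFReal (m i) 1 y with hS
  have hSpos : 0 < S := sum_gaussianPDFReal_pos m y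
  have hw0 : ∀ j, 0 ≤ gaussianPDFReal (m j) 1 y / S :=
    fun j => div_nonneg (gaussianPDFReal_nonneg _ _ _) hSpos.le
  have hw1 : ∑ j, gaussianPDFReal (m j) 1 y / S = 1 := by
    rw [← Finset.sum_div, ← hS, div_self hSpos.ne']
  have hdiff : x k - posteriorMean x m y = ∑ j, gaussianPDFReal (m j) 1 y / S * (x k - x j) := by
    simp_rw [mul_sub]
    rw [Finset.sum_sub_distrib, ← Finset.sum_mul, hw1, one_mul]
    rfl
  have hjensen : (x k - posteriorMean x m y) ^ 2 ≤
      ∑ j, gaussianPDFReal (m j) 1 y / S * (x k - x j) ^ 2 := by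
    rw [hdiff]
    exact Real.pow_arith_mean_le_arith_mean_pow_of_even _ _ _ (fun j _ => hw0 j) hw1 even_two
  refine (mul_le_mul_of_nonneg_left hjensen (gaussianPDFReal_nonneg _ _ _)).trans ?_
  rw [Finset.mul_sum]
  refine Finset.sum_le_sum fun j _ => ?_
  obtain rfl | hkj := eq_or_ne k j
  · simp
  set h := Real.exp (-(m k - m j) ^ 2 / 8) * gaussianPDFReal ((m k + m j) / 2) 1 y
  have hh : 0 ≤ h := mul_nonneg (Real.exp_pos _).le (gaussianPDFReal_nonneg _ _ _)
  have hprod : gaussianPDFReal (m k) 1 y * gaussianPDFReal (m j) 1 y = h ^ 2 :=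
    gaussianPDFReal_mul_gaussianPDFReal _ _ _
  have hle : gaussianPDFReal (m k) 1 y + gaussianPDFReal (m j) 1 y ≤ S :=
    Finset.add_le_sum (f := fun i => gaussianPDFReal (m i) 1 y)
      (fun i _ => gaussianPDFReal_nonneg _ _ _) (Finset.mem_univ k) (Finset.mem_univ j) hkj
  have hamgm : 2 * h ≤ S := by
    refine le_trans (abs_le_of_sq_le_sq' ?_ ?_).2 hle
    · nlinarith [sq_nonneg (gaussianPDFReal (m k) 1 y - gaussianPDFReal (m j) 1 y)]
    · exact add_nonneg (gaussianPDFReal_nonneg _ _ _) (gaussianPDFReal_nonneg _ _ _)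
  have hbound : h ^ 2 / S ≤ h / 2 := by
    rw [div_le_div_iff₀ hSpos two_pos]
    nlinarith
  calc gaussianPDFReal (m k) 1 y * (gaussianPDFReal (m j) 1 y / S * (x k - x j) ^ 2)
      = (x k - x j) ^ 2 * (h ^ 2 / S) := by rw [← hprod]; ring
    _ ≤ (x k - x j) ^ 2 * (h / 2) := mul_le_mul_of_nonneg_left hbound (sq_nonneg _)
    _ = (x k - x j) ^ 2 / 2 * h := by ring

lemma integral_sq_sub_posteriorMean_le (k : ι) :
    ∫ y, (x k - posteriorMean x m y) ^ 2 ∂gaussianReal (m k) 1 ≤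
      ∑ j, (x k - x j) ^ 2 / 2 * Real.exp (-(m k - m j) ^ 2 / 8) := by
  have hint : ∀ j, Integrable fun y => (x k - x j) ^ 2 / 2 *
      (Real.exp (-(m k - m j) ^ 2 / 8) * gaussianPDFReal ((m k + m j) / 2) 1 y) :=
    fun j => ((integrable_gaussianPDFReal _ _).const_mul _).const_mul _
  rw [integral_gaussianReal_eq_integral_smul one_ne_zero]
  calc _ ≤ ∫ y, ∑ j, (x k - x j) ^ 2 / 2 *
        (Real.exp (-(m k - m j) ^ 2 / 8) * gaussianPDFReal ((m k + m j) / 2) 1 y) := by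
        refine integral_mono_of_nonneg (ae_of_all _ fun y => ?_)
          (integrable_finsetSum _ fun j _ => hint j)
          (ae_of_all _ fun y => mul_sq_sub_posteriorMean_le x m y k)
        exact mul_nonneg (gaussianPDFReal_nonneg _ _ _) (sq_nonneg _)
    _ = _ := by
        rw [integral_finsetSum _ fun j _ => hint j]
        simp_rw [integral_const_mul, integral_gaussianPDFReal_eq_one _ one_ne_zero, mul_one]

end PosteriorMean

/-- Pairwise (Bhattacharyya-type) bound on the MMSE of a `PAM(N)` input. -/
lemma mmseS_le_sum_pairwise {Ω : Type*} [MeasurableSpace Ω] {μ : Measure Ω}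
    [IsProbabilityMeasure μ] {X Z : Ω → ℝ} (hX : Measurable X) (hZ : Measurable Z)
    (hZlaw : Measure.map Z μ = gaussianReal 0 1) (hindep : IndepFun X Z μ) {N : ℕ} (hN : N ≠ 0)
    (hXlaw : Measure.map X μ = pamLaw N) {s : ℝ} (hs : 0 ≤ s) :
    mmseS μ X Z s ≤ (N : ℝ)⁻¹ * ∑ k : Fin N, ∑ j : Fin N, (pamPoint N k - pamPoint N j) ^ 2 / 2 *
      Real.exp (-(s * (pamPoint N k - pamPoint N j) ^ 2 / 8)) := by
  have : NeZero N := ⟨hN⟩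
  have := isProbabilityMeasure_pamLaw hN
  have hY := measurable_obsS hX hZ s
  set m : Fin N → ℝ := fun k => Real.sqrt s * pamPoint N k
  set g := posteriorMean (pamPoint N) m
  have hg : Measurable g := measurable_posteriorMean _ _
  have hX2 := memLp_two_of_map_eq_pamLaw hX hN hXlaw
  have hg2 : MemLp (fun ω => g (obsS X Z s ω)) 2 μ :=
    MemLp.of_bound (hg.comp hY).aestronglyMeasurable _
      (ae_of_all _ fun ω => abs_posteriorMean_le (pamPoint N) m _)
  have hgm : StronglyMeasurable[obsSigmaS X Z s] fun ω => g (obsS X Z s ω) :=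
    (hg.comp (comap_measurable (obsS X Z s))).stronglyMeasurable
  set H : ℝ × ℝ → ℝ := fun p => (p.1 - g (Real.sqrt s * p.1 + p.2)) ^ 2
  have hH : Measurable H := by fun_prop
  have hmap : Measure.map (fun ω => (X ω, Z ω)) μ = (pamLaw N).prod (gaussianReal 0 1) := by
    rw [hindep.map_prod_eq_prod_map_map hX.aemeasurable hZ.aemeasurable, hXlaw, hZlaw]
  have hHint : Integrable H ((pamLaw N).prod (gaussianReal 0 1)) := by
    rw [← hmap, integrable_map_measure hH.aestronglyMeasurable (hX.prodMk hZ).aemeasurable]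
    exact (hX2.sub hg2).integrable_sq
  calc mmseS μ X Z s
      ≤ ∫ ω, (X ω - g (obsS X Z s ω)) ^ 2 ∂μ :=
        integral_sq_sub_condExp_le hY.comap_le hX2 hg2 hgm
    _ = ∫ p, H p ∂((pamLaw N).prod (gaussianReal 0 1)) := by
        rw [← hmap, integral_map (hX.prodMk hZ).aemeasurable hH.aestronglyMeasurable]
        rfl
    _ = (N : ℝ)⁻¹ * ∑ k : Fin N, ∫ z, H (pamPoint N k, z) ∂gaussianReal 0 1 := by
        rw [integral_prod _ hHint, integral_pamLaw]
    _ ≤ _ := by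
        refine mul_le_mul_of_nonneg_left (Finset.sum_le_sum fun k _ => ?_) (by positivity)
        have hshift : ∫ z, H (pamPoint N k, z) ∂gaussianReal 0 1 =
            ∫ y, (pamPoint N k - g y) ^ 2 ∂gaussianReal (m k) 1 := by
          have h := gaussianReal_map_const_add (μ := 0) (v := 1) (m k)
          rw [zero_add] at h
          rw [← h, integral_map (by fun_prop)
            ((hg.const_sub _).pow_const 2).aestronglyMeasurable]
        rw [hshift]
        refine (integral_sq_sub_posteriorMean_le (pamPoint N) m k).trans (le_of_eq ?_)
        refine Finset.sum_congr rfl fun j _ => ?_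
        congr 2
        simp only [m]
        rw [← mul_sub, mul_pow, Real.sq_sqrt hs]
        ring

lemma add_one_sq_mul_exp_le {t : ℝ} (ht : Real.exp (-t) ≤ 1 / 24) (n : ℕ) :
    ((n : ℝ) + 1) ^ 2 * Real.exp (-(t * ((n : ℝ) + 1) ^ 2)) ≤ Real.exp (-t) * (1 / 6) ^ n := by
  have ht0 : 0 ≤ t := by
    have : Real.exp (-t) ≤ 1 := by linarith
    linarith [Real.exp_le_one_iff.1 this]
  have h4 : ((n : ℝ) + 1) ^ 2 ≤ 4 ^ n := by
    induction n with
    | zero => simp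
    | succ n ih =>
      rw [pow_succ 4]
      push_cast
      nlinarith [(Nat.cast_nonneg n : (0 : ℝ) ≤ n)]
  have hexp : Real.exp (-(t * ((n : ℝ) + 1) ^ 2)) ≤ Real.exp (-t) * (1 / 24) ^ n := by
    calc Real.exp (-(t * ((n : ℝ) + 1) ^ 2)) ≤ Real.exp (-t + n * -t) := by
          refine Real.exp_le_exp.2 ?_
          have : 0 ≤ t * (n ^ 2 + n) := by positivity
          nlinarith
      _ = Real.exp (-t) * Real.exp (-t) ^ n := by rw [Real.exp_add, Real.exp_nat_mul]
      _ ≤ _ := by gcongr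
  calc _ ≤ (4 : ℝ) ^ n * (Real.exp (-t) * (1 / 24) ^ n) := by gcongr
    _ = Real.exp (-t) * (4 * (1 / 24)) ^ n := by rw [mul_pow]; ring
    _ = _ := by norm_num

lemma sum_range_add_one_sq_mul_exp_le {t : ℝ} (ht : Real.exp (-t) ≤ 1 / 24) (n : ℕ) :
    ∑ i ∈ Finset.range n, ((i : ℝ) + 1) ^ 2 * Real.exp (-(t * ((i : ℝ) + 1) ^ 2)) ≤
      6 / 5 * Real.exp (-t) := by
  refine (Finset.sum_le_sum fun i _ => add_one_sq_mul_exp_le ht i).trans ?_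
  rw [← Finset.mul_sum, geom_sum_eq (by norm_num), mul_comm]
  have : (0 : ℝ) ≤ (1 / 6) ^ n := by positivity
  refine mul_le_mul_of_nonneg_right ?_ (Real.exp_pos _).le
  rw [div_le_iff_of_neg (by norm_num)]
  linarith

lemma sum_sq_sub_mul_exp_le {t : ℝ} (ht : Real.exp (-t) ≤ 1 / 24) {N : ℕ} (k : Fin N) :
    ∑ j : Fin N, ((k : ℝ) - j) ^ 2 * Real.exp (-(t * ((k : ℝ) - j) ^ 2)) ≤
      12 / 5 * Real.exp (-t) := by
  obtain ⟨n, hn⟩ : ∃ n, N = (k : ℕ) + 1 + n := ⟨N - (k + 1), by omega⟩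
  rw [Fin.sum_univ_eq_sum_range
    (fun j : ℕ => ((k : ℝ) - j) ^ 2 * Real.exp (-(t * ((k : ℝ) - j) ^ 2))) N]
  generalize (k : ℕ) = k at hn ⊢
  rw [hn, Finset.sum_range_add, Finset.sum_range_succ, ← Finset.sum_range_reflect]
  have hleft := sum_range_add_one_sq_mul_exp_le ht k
  have hright := sum_range_add_one_sq_mul_exp_le ht n
  have h1 : ∑ j ∈ Finset.range k, ((k : ℝ) - ((k - 1 - j : ℕ) : ℝ)) ^ 2 *
      Real.exp (-(t * ((k : ℝ) - ((k - 1 - j : ℕ) : ℝ)) ^ 2)) =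
      ∑ i ∈ Finset.range k, ((i : ℝ) + 1) ^ 2 * Real.exp (-(t * ((i : ℝ) + 1) ^ 2)) := by
    refine Finset.sum_congr rfl fun j hj => ?_
    have hj := Finset.mem_range.1 hj
    have : ((k - 1 - j : ℕ) : ℝ) = k - 1 - j := by
      rw [Nat.sub_sub, Nat.cast_sub (by omega)]
      push_cast
      ring
    rw [this, show (k : ℝ) - (k - 1 - j) = j + 1 by ring]
  have h2 : ∑ j ∈ Finset.range n, ((k : ℝ) - ((k + 1 + j : ℕ) : ℝ)) ^ 2 *
      Real.exp (-(t * ((k : ℝ) - ((k + 1 + j : ℕ) : ℝ)) ^ 2)) =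
      ∑ i ∈ Finset.range n, ((i : ℝ) + 1) ^ 2 * Real.exp (-(t * ((i : ℝ) + 1) ^ 2)) := by
    refine Finset.sum_congr rfl fun j _ => ?_
    rw [show ((k : ℝ) - ((k + 1 + j : ℕ) : ℝ)) ^ 2 = ((j : ℝ) + 1) ^ 2 by push_cast; ring]
  rw [h1, h2]
  simp only [sub_self]
  linarith

lemma mmseS_pam_le {Ω : Type*} [MeasurableSpace Ω] {μ : Measure Ω}
    [IsProbabilityMeasure μ] {X Z : Ω → ℝ} (hX : Measurable X) (hZ : Measurable Z)
    (hZlaw : Measure.map Z μ = gaussianReal 0 1) (hindep : IndepFun X Z μ) {N : ℕ} (hN : 2 ≤ N)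
    (hXlaw : Measure.map X μ = pamLaw N) {s : ℝ} (hs : 0 ≤ s)
    (ht : Real.exp (-(s * (12 / ((N : ℝ) ^ 2 - 1)) / 8)) ≤ 1 / 24) :
    mmseS μ X Z s ≤ 12 * Real.exp (-(s * (12 / ((N : ℝ) ^ 2 - 1)) / 8)) := by
  have h3 := three_le_sq_sub_one hN
  have hN0 : (N : ℝ) ≠ 0 := by positivity
  set D : ℝ := 12 / ((N : ℝ) ^ 2 - 1) with hD
  have hD4 : D ≤ 4 := by
    rw [hD, div_le_iff₀ (by linarith)]
    linarith
  have hD0 : 0 ≤ D := by positivity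
  have hsq : ∀ k j : Fin N, (pamPoint N k - pamPoint N j) ^ 2 = D * ((k : ℝ) - j) ^ 2 := by
    intro k j
    simp only [pamPoint, ← hD]
    rw [← mul_sub, mul_pow, Real.sq_sqrt hD0]
    ring
  refine (mmseS_le_sum_pairwise hX hZ hZlaw hindep (by omega) hXlaw hs).trans ?_
  calc _ ≤ (N : ℝ)⁻¹ * ∑ k : Fin N, 12 * Real.exp (-(s * D / 8)) := by
        refine mul_le_mul_of_nonneg_left (Finset.sum_le_sum fun k _ => ?_) (by positivity)
        calc _ = D / 2 * ∑ j : Fin N, ((k : ℝ) - j) ^ 2 *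
              Real.exp (-(s * D / 8 * ((k : ℝ) - j) ^ 2)) := by
              rw [Finset.mul_sum]
              refine Finset.sum_congr rfl fun j _ => ?_
              rw [hsq, mul_div_right_comm D, mul_assoc]
              congr 3
              ring
          _ ≤ D / 2 * (12 / 5 * Real.exp (-(s * D / 8))) :=
              mul_le_mul_of_nonneg_left (sum_sq_sub_mul_exp_le ht k) (by positivity)
          _ ≤ _ := by
              have := Real.exp_pos (-(s * D / 8))
              nlinarith
    _ = _ := by
        rw [Finset.sum_const, Finset.card_univ, Fintype.card_fin, nsmul_eq_mul,
          inv_mul_cancel_left₀ hN0]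

/-- **Proposition 8 (strong-interference achievability gap with a discrete input).**
For `1 ≤ snr ≤ snr0`, `β ∈ (0,1]`, the input `X_D ~ PAM(N)` with the stated `N`
satisfies the MMSE constraint and is within the stated gap of `½·log(1+snr)`. -/
theorem strong_interference_achievability_gap
    {Ω : Type*} [MeasurableSpace Ω] (μ : Measure Ω) [IsProbabilityMeasure μ]
    (XD Z : Ω → ℝ) (hXD : Measurable XD) (hZ : Measurable Z)
    (hZlaw : Measure.map Z μ = gaussianReal 0 1)
    (hindep : IndepFun XD Z μ)
    (snr snr0 β : ℝ) (hsnr : 1 ≤ snr) (hle : snr ≤ snr0) (hβ0 : 0 < β) (hβ1 : β ≤ 1)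
    (c2 : ℝ) (hc2 : c2 = 3 / (2 * Real.log (12 * (1 + β * snr0) / β)))
    (N : ℕ) (hN : N = ⌊Real.sqrt (1 + c2 * snr)⌋₊)
    (hXDlaw : Measure.map XD μ = pamLaw N) :
    mmseS μ XD Z snr0 ≤ β / (1 + β * snr0) ∧
    (1 / 2) * Real.log (1 + snr) - miS μ XD Z snr ≤
      (1 / 2) * Real.log (1 + (2 / 3) * Real.log (12 * (1 + β * snr0) / β))
        + (1 / 2) * Real.log (4 * Real.pi * Real.exp 1 / 6) := by
  have hsnr0 : 1 ≤ snr0 := hsnr.trans hle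
  set A : ℝ := 12 * (1 + β * snr0) / β with hA
  have hA24 : 24 ≤ A := by
    rw [hA, le_div_iff₀ hβ0]
    nlinarith
  set L : ℝ := Real.log A with hL
  have hLpos : 0 < L := Real.log_pos (by linarith)
  have hc2pos : 0 < c2 := by rw [hc2]; positivity
  set r : ℝ := Real.sqrt (1 + c2 * snr) with hr
  have hr2 : r ^ 2 = 1 + c2 * snr := Real.sq_sqrt (by positivity)
  have hr1 : 1 ≤ r := Real.one_le_sqrt.2 (by nlinarith)
  have hN1 : 1 ≤ N := by rw [hN]; exact Nat.le_floor (by simpa using hr1)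
  have hNr : (N : ℝ) ≤ r := by rw [hN]; exact Nat.floor_le (by linarith)
  have hrN : r < N + 1 := by rw [hN]; exact Nat.lt_floor_add_one r
  have hN1' : (1 : ℝ) ≤ N := by exact_mod_cast hN1
  have hNsq : (N : ℝ) ^ 2 - 1 ≤ c2 * snr := by nlinarith
  constructor
  · obtain hN2 | rfl : 2 ≤ N ∨ N = 1 := by omega
    · have h3 := three_le_sq_sub_one hN2
      have hexp : Real.exp (-(snr0 * (12 / ((N : ℝ) ^ 2 - 1)) / 8)) ≤ A⁻¹ := by
        rw [← Real.exp_log (show 0 < A by linarith), ← Real.exp_neg, ← hL]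
        refine Real.exp_le_exp.2 (neg_le_neg ?_)
        have hc2L : c2 * (2 * L) = 3 := by rw [hc2]; field_simp
        rw [mul_div_assoc', div_div, le_div_iff₀ (by positivity)]
        nlinarith
      have hA' : A⁻¹ ≤ 1 / 24 := by
        rw [one_div]
        exact inv_anti₀ (by norm_num) hA24
      refine (mmseS_pam_le hXD hZ hZlaw hindep hN2 hXDlaw (by linarith) (hexp.trans hA')).trans ?_
      calc _ ≤ 12 * A⁻¹ := by gcongr
        _ = _ := by rw [hA]; field_simp
    · refine (mmseS_le_sum_pairwise hXD hZ hZlaw hindep one_ne_zero hXDlaw (by linarith)).trans ?_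
      simp only [Finset.univ_unique, Finset.sum_singleton, sub_self, ne_eq,
        OfNat.ofNat_ne_zero, not_false_eq_true, zero_pow, zero_div, zero_mul, mul_zero]
      positivity
  · have hmi : Real.log N - 1 / 2 * Real.log (1 + ((N : ℝ) ^ 2 - 1) / (1 + snr)) -
        1 / 2 * Real.log (Real.pi * Real.exp 1 / 6) ≤ miS μ XD Z snr := by
      obtain hN2 | rfl : 2 ≤ N ∨ N = 1 := by omega
      · exact ozarow_wyner_le_miS hXD hZ hZlaw hindep hN2 hXDlaw (by linarith)
      · refine le_trans ?_ (miS_nonneg hXD hZ one_ne_zero hXDlaw snr)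
        have : 0 ≤ Real.log (Real.pi * Real.exp 1 / 6) := by
          refine Real.log_nonneg ?_
          nlinarith [Real.pi_gt_three, Real.add_one_le_exp 1]
        simp only [Nat.cast_one, Real.log_one, one_pow, sub_self, zero_div, add_zero]
        linarith
    have hc2L : c2 * (2 / 3 * L) = 1 := by rw [hc2]; field_simp
    have h4N : snr ≤ 4 * (N : ℝ) ^ 2 * (2 / 3 * L) := by
      have h4 : c2 * snr ≤ 4 * (N : ℝ) ^ 2 := by nlinarith
      calc snr = c2 * snr * (2 / 3 * L) := by linear_combination (-snr) * hc2L
        _ ≤ _ := mul_le_mul_of_nonneg_right h4 (by positivity)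
    have hfrac : 0 ≤ ((N : ℝ) ^ 2 - 1) / (1 + snr) :=
      div_nonneg (by nlinarith) (by linarith)
    have hkey : (1 + snr) * (1 + ((N : ℝ) ^ 2 - 1) / (1 + snr)) ≤
        (1 + 2 / 3 * L) * (4 * (N : ℝ) ^ 2) := by
      rw [mul_add, mul_div_cancel₀ _ (by linarith)]
      nlinarith
    have hlog := Real.log_le_log (by positivity) hkey
    rw [Real.log_mul (by positivity) (by positivity), Real.log_mul (by positivity) (by positivity),
      Real.log_mul (by positivity) (by positivity), Real.log_pow] at hlog
    rw [show 4 * Real.pi * Real.exp 1 / 6 = 4 * (Real.pi * Real.exp 1 / 6) by ring,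
      Real.log_mul (by positivity) (by positivity)]
    push_cast at hlog
    linarith

end
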